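/- Let I and J be finite index sets, let (aᵢ)_{i∈I}, (bᵢ)_{i∈I} be real numbers with bᵢ ≠ 0 for all i, let (uⱼ)_{j∈J}, (vⱼ)_{j∈J} be real numbers with vⱼ ≠ 0 for all j, let c₁, c₂ ≥ 0, and let r̄, r ∈ ℝ. If Σ_{i∈I} aᵢ²/(2|bᵢ|) + (c₁/2)·r̄ + (c₂/2)·Σ_{j∈J} uⱼ²/|vⱼ| ≤ Σ_{i∈I} bᵢ²/(2|bᵢ|) + (c₁/2)·r + (c₂/2)·Σ_{j∈J} vⱼ²/|vⱼ|, then Σ_{i∈I} |aᵢ| + (c₁/2)·r̄ + c₂·Σ_{j∈J} |uⱼ| ≤ Σ_{i∈I} |bᵢ| + (c₁/2)·r + c₂·Σ_{j∈J} |vⱼ|. -/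

import Mathlib

/-!
For `y ≠ 0` the quadratic `x ↦ x² / (2|y|) + |y| / 2` lies above `|x|`, by the inequality of
arithmetic and geometric means, and touches it at `x = y`. Hence passing from `y` to `x` changes
the absolute value by at most the change of the quadratic, and summing these comparisons turns a
decrease of the surrogate into a decrease of the `L¹` objective.
-/

theorem sum_div_const_mul {K ι : Type*} [Semifield K] (s : Finset ι) (f g : ι → K) (c : K) :
    ∑ i ∈ s, f i / (c * g i) = (∑ i ∈ s, f i / g i) / c := by
  simp only [Finset.sum_div, div_div, mul_comm]

section Majorization

variable {K ι : Type*} [Field K] [LinearOrder K]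

theorem sq_div_two_mul_abs_self (y : K) : y ^ 2 / (2 * |y|) = |y| / 2 := by
  rw [← sq_abs, sq, mul_comm 2, ← div_div, mul_self_div_self]

variable [IsStrictOrderedRing K]

theorem abs_le_sq_div_two_mul_add_half (x : K) {t : K} (ht : 0 < t) :
    |x| ≤ x ^ 2 / (2 * t) + t / 2 :=
  calc
    |x| = 2 * |x| * t / (2 * t) := by field_simp
    _ ≤ (|x| ^ 2 + t ^ 2) / (2 * t) := by
      gcongr
      exact two_mul_le_add_sq |x| t
    _ = x ^ 2 / (2 * t) + t / 2 := by
      rw [sq_abs]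
      field_simp

theorem abs_sub_abs_le_sq_div_sub_sq_div (x : K) {y : K} (hy : y ≠ 0) :
    |x| - |y| ≤ x ^ 2 / (2 * |y|) - y ^ 2 / (2 * |y|) := by
  have majorization := abs_le_sq_div_two_mul_add_half x (abs_pos.mpr hy)
  rw [sq_div_two_mul_abs_self]
  linarith

theorem sum_abs_sub_sum_abs_le_sum_sq_div_sub_sum_sq_div (s : Finset ι) (x : ι → K) {y : ι → K}
    (hy : ∀ i ∈ s, y i ≠ 0) :
    ∑ i ∈ s, |x i| - ∑ i ∈ s, |y i| ≤
      ∑ i ∈ s, x i ^ 2 / (2 * |y i|) - ∑ i ∈ s, y i ^ 2 / (2 * |y i|) := by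
  simp only [← Finset.sum_sub_distrib]
  exact Finset.sum_le_sum fun i hi ↦ abs_sub_abs_le_sq_div_sub_sq_div (x i) (hy i hi)

end Majorization

theorem stmt_4_general {K ι κ : Type*} [Field K] [LinearOrder K] [IsStrictOrderedRing K]
    (I : Finset ι) (J : Finset κ) (a b : ι → K) (u v : κ → K) (c₁ c₂ : K) (r' r : K)
    (hb : ∀ i ∈ I, b i ≠ 0) (hv : ∀ j ∈ J, v j ≠ 0) (hc₂ : 0 ≤ c₂)
    (h : ∑ i ∈ I, (a i) ^ 2 / (2 * |b i|) + c₁ / 2 * r' +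
          c₂ / 2 * ∑ j ∈ J, (u j) ^ 2 / |v j| ≤
        ∑ i ∈ I, (b i) ^ 2 / (2 * |b i|) + c₁ / 2 * r +
          c₂ / 2 * ∑ j ∈ J, (v j) ^ 2 / |v j|) :
    ∑ i ∈ I, |a i| + c₁ / 2 * r' + c₂ * ∑ j ∈ J, |u j| ≤
      ∑ i ∈ I, |b i| + c₁ / 2 * r + c₂ * ∑ j ∈ J, |v j| := by
  have surface_change := sum_abs_sub_sum_abs_le_sum_sq_div_sub_sum_sq_div I a hb
  have slack_change := sum_abs_sub_sum_abs_le_sum_sq_div_sub_sum_sq_div J u hv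
  rw [sum_div_const_mul J, sum_div_const_mul J] at slack_change
  have weighted_slack_change := mul_le_mul_of_nonneg_left slack_change hc₂
  linarith

theorem stmt_4 {ι κ : Type*} (I : Finset ι) (J : Finset κ)
    (a b : ι → ℝ) (u v : κ → ℝ) (c₁ c₂ : ℝ) (r' r : ℝ)
    (hb : ∀ i ∈ I, b i ≠ 0) (hv : ∀ j ∈ J, v j ≠ 0)
    (hc₁ : 0 ≤ c₁) (hc₂ : 0 ≤ c₂)
    (h : ∑ i ∈ I, (a i) ^ 2 / (2 * |b i|) + c₁ / 2 * r' +
          c₂ / 2 * ∑ j ∈ J, (u j) ^ 2 / |v j| ≤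
        ∑ i ∈ I, (b i) ^ 2 / (2 * |b i|) + c₁ / 2 * r +
          c₂ / 2 * ∑ j ∈ J, (v j) ^ 2 / |v j|) :
    ∑ i ∈ I, |a i| + c₁ / 2 * r' + c₂ * ∑ j ∈ J, |u j| ≤
      ∑ i ∈ I, |b i| + c₁ / 2 * r + c₂ * ∑ j ∈ J, |v j| :=
  stmt_4_general I J a b u v c₁ c₂ r' r hb hv hc₂ h
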